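/- Let T be a tree rooted at r with a rooted path decomposition 𝒫, and let ℓ = (u,v) be a link (a pair of distinct vertices of T). For a path Q ∈ 𝒫, say ℓ is Q-non-rooted if the path P(u,v) ∩ Q is nonempty and neither of its endpoints is the root of Q (the endpoint of Q closest to r). Then there is at most one path Q ∈ 𝒫 for which ℓ is Q-non-rooted. -/

import Mathlib

/-!
Call `i` non-rooted when `p` shares an edge with `Q i`, but no shared edge contains `A i`.

* For a non-rooted `i`, the vertex `A i` is not on `p`: otherwise the segment of `Q i` from `A i`
  to a vertex shared with `p` is also a segment of `p`, and its first edge contains `A i`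
  (`notMem_support_of_nonrooted`). Hence all of `p` lies in one component of `T - A i`, and so,
  since `A i` is an ancestor of some vertex of `p`, it is a proper ancestor of every vertex of `p`.
* If `i` and `j` are both non-rooted, then `A i` and `A j` are ancestors of a common vertex, so
  one of them, say `A i`, is an ancestor of the other. `Q i` descends from `A i` to `p`, which lies
  below `A j`, and therefore passes through `A j`.
* Now both `Q i` and `Q j` contain a path from `A j` to a vertex of `p`, and `A j` is not on `p`.
  By acyclicity these two paths leave `A j` along the same edge (`exists_common_first_edge`), and
  as the `Q`s partition the edges, `i = j`.
-/

namespace SimpleGraph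

/-- Any two vertices on a walk are joined by a path that stays inside the walk. -/
lemma Walk.exists_path_within {V : Type*} {G : SimpleGraph V} {u v c d : V} (p : G.Walk u v)
    (hc : c ∈ p.support) (hd : d ∈ p.support) :
    ∃ q : G.Walk c d, q.IsPath ∧ q.edges ⊆ p.edges ∧ q.support ⊆ p.support := by
  classical
  refine ⟨((p.takeUntil c hc).reverse.append (p.takeUntil d hd)).bypass,
    Walk.bypass_isPath _, fun e he => ?_, fun w hw => ?_⟩
  · have h := Walk.edges_bypass_subset_edges _ he
    rw [Walk.edges_append, List.mem_append, Walk.edges_reverse, List.mem_reverse] at h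
    exact h.elim (fun h => Walk.edges_takeUntil_subset_edges _ _ h)
      (fun h => Walk.edges_takeUntil_subset_edges _ _ h)
  · have h := Walk.support_bypass_subset_support _ hw
    rw [Walk.mem_support_append_iff, Walk.support_reverse, List.mem_reverse] at h
    exact h.elim (fun h => Walk.support_takeUntil_subset_support _ _ h)
      (fun h => Walk.support_takeUntil_subset_support _ _ h)

/-- Two paths leaving `a` towards the same component of `G - a` start with the same edge. -/
lemma IsAcyclic.exists_common_first_edge {V : Type*} {G : SimpleGraph V} (hG : G.IsAcyclic)
    {a x y : V} (P : G.Walk a x) (P' : G.Walk a y) (hP : P.IsPath) (hP' : P'.IsPath)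
    (W : G.Walk x y) (hW : a ∉ W.support) :
    ∃ e, e ∈ P.edges ∧ e ∈ P'.edges ∧ a ∈ e := by
  classical
  cases P with
  | nil => exact absurd W.start_mem_support hW
  | @cons _ b _ h P₁ =>
    rw [Walk.cons_isPath_iff] at hP
    -- Continue `P` along `W` to obtain a second path from `a` to `y`, which must be `P'`.
    have hpath : (Walk.cons h (P₁.append W).bypass).IsPath := by
      rw [Walk.cons_isPath_iff]
      refine ⟨Walk.bypass_isPath _, fun ha => ?_⟩
      have ha' := Walk.support_bypass_subset_support _ ha
      rw [Walk.mem_support_append_iff] at ha'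
      exact ha'.elim hP.2 hW
    have heq : P' = Walk.cons h (P₁.append W).bypass :=
      congrArg Subtype.val ((hG.subsingleton_path _ _).elim ⟨P', hP'⟩ ⟨_, hpath⟩)
    exact ⟨s(a, b), by simp, by simp [heq], by simp⟩

/-- If `Q` shares an edge with `p`, but no shared edge contains the starting vertex `a` of `Q`,
then `p` avoids `a`, and some vertex of `Q` lies on `p`. -/
lemma IsAcyclic.notMem_support_of_nonrooted {V : Type*} {G : SimpleGraph V} (hG : G.IsAcyclic)
    {a b u v : V} (Q : G.Walk a b) (p : G.Walk u v)
    (h₁ : ∃ e, e ∈ p.edges ∧ e ∈ Q.edges) (h₂ : ∀ e ∈ p.edges, e ∈ Q.edges → a ∉ e) :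
    a ∉ p.support ∧ ∃ x, x ∈ p.support ∧ x ∈ Q.support := by
  obtain ⟨e, hep, heQ⟩ := h₁
  have hae := h₂ e hep heQ
  induction e using Sym2.ind with
  | _ x y =>
    have hxp := Walk.fst_mem_support_of_mem_edges _ hep
    have hxQ := Walk.fst_mem_support_of_mem_edges _ heQ
    refine ⟨fun ha => ?_, x, hxp, hxQ⟩
    obtain ⟨q, hq, hqe, -⟩ := p.exists_path_within ha hxp
    obtain ⟨q', hq', hqe', -⟩ := Q.exists_path_within Q.start_mem_support hxQ
    have hax : a ≠ x := by rintro rfl; simp at hae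
    obtain ⟨f, hf, hf', haf⟩ :=
      hG.exists_common_first_edge q q' hq hq' Walk.nil (by simpa using hax)
    exact h₂ f (hqe hf) (hqe' hf') haf

/-- If `a` separates `r` from one vertex of `p` but is not on `p`, then it separates `r` from
every vertex of `p`. -/
lemma mem_support_of_separates {V : Type*} {G : SimpleGraph V} {r a u v x y : V}
    (p : G.Walk u v) (ha : a ∉ p.support) (hx : x ∈ p.support) (hy : y ∈ p.support)
    (hsep : ∀ q : G.Walk r x, q.IsPath → a ∈ q.support) (q : G.Walk r y) : a ∈ q.support := by
  classical
  obtain ⟨W, -, -, hWs⟩ := p.exists_path_within hy hx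
  have h := Walk.support_bypass_subset_support _ (hsep (q.append W).bypass (Walk.bypass_isPath _))
  rw [Walk.mem_support_append_iff] at h
  exact h.elim id (fun h => absurd (hWs h) ha)

/-- Two walks that both meet `p` and pass through a vertex `a` off `p` share an edge. -/
lemma IsAcyclic.exists_common_edge {V : Type*} {G : SimpleGraph V} (hG : G.IsAcyclic)
    {a b c d e u v x y : V} (p : G.Walk u v) (Q : G.Walk b c) (Q' : G.Walk d e)
    (ha : a ∉ p.support) (haQ : a ∈ Q.support) (haQ' : a ∈ Q'.support)
    (hx : x ∈ p.support) (hxQ : x ∈ Q.support) (hy : y ∈ p.support) (hyQ' : y ∈ Q'.support) :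
    ∃ f, f ∈ Q.edges ∧ f ∈ Q'.edges := by
  obtain ⟨W, -, -, hW⟩ := p.exists_path_within hx hy
  obtain ⟨q, hq, hqe, -⟩ := Q.exists_path_within haQ hxQ
  obtain ⟨q', hq', hqe', -⟩ := Q'.exists_path_within haQ' hyQ'
  obtain ⟨f, hf, hf', -⟩ := hG.exists_common_first_edge q q' hq hq' W (fun h => ha (hW h))
  exact ⟨f, hqe hf, hqe' hf'⟩

/-- The ancestor relation (lying on the path from the root) is antisymmetric. -/
lemma IsAcyclic.eq_of_mem_support {V : Type*} {G : SimpleGraph V} (hG : G.IsAcyclic)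
    {r a b : V} (R : G.Walk r a) (R' : G.Walk r b) (hR : R.IsPath) (hR' : R'.IsPath)
    (hb : b ∈ R.support) (ha : a ∈ R'.support) : a = b := by
  classical
  by_contra hne
  have heq : R' = R.takeUntil b hb :=
    congrArg Subtype.val ((hG.subsingleton_path _ _).elim ⟨R', hR'⟩ ⟨_, hR.takeUntil hb⟩)
  rw [heq] at ha
  exact Walk.endpoint_notMem_support_takeUntil hR hb hne ha

end SimpleGraph

/-- Let `T` be a tree rooted at `r` with a rooted path decomposition `Q` (a partition of
the edge set into paths, each having the least common ancestor `A i` of its vertices as an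
endpoint), and let `ℓ = (u,v)` be a link (a pair of distinct vertices), with tree path
`p = P(u,v)`.  Call `ℓ` `Q i`-non-rooted if `p` shares an edge with `Q i` but the root
`A i` of `Q i` is not a vertex of the intersection path `p ∩ Q i` (equivalently, `A i`
is not an endpoint of the intersection).  Then there is at most one `i` for which `ℓ`
is `Q i`-non-rooted. -/
theorem stmt3 {V : Type*} [Fintype V] (G : SimpleGraph V) (hT : G.IsTree) (r : V)
    (k : ℕ) (A B : Fin k → V) (Q : ∀ i, G.Walk (A i) (B i))
    (hpath : ∀ i, (Q i).IsPath)
    (hpartition : ∀ e ∈ G.edgeSet, ∃! i, e ∈ (Q i).edges)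
    (hrooted : ∀ i, ∀ w ∈ (Q i).support, ∀ (q : G.Walk r w), q.IsPath → A i ∈ q.support)
    (u v : V) (huv : u ≠ v) (p : G.Walk u v) (hp : p.IsPath) :
    ∀ i j : Fin k,
      ((∃ e, e ∈ p.edges ∧ e ∈ (Q i).edges) ∧
        ∀ e ∈ p.edges, e ∈ (Q i).edges → A i ∉ e) →
      ((∃ e, e ∈ p.edges ∧ e ∈ (Q j).edges) ∧
        ∀ e ∈ p.edges, e ∈ (Q j).edges → A j ∉ e) →
      i = j := by
  intro i j ⟨hi₁, hi₂⟩ ⟨hj₁, hj₂⟩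
  have hG := hT.isAcyclic
  obtain ⟨hAi, x, hxp, hxQ⟩ := hG.notMem_support_of_nonrooted (Q i) p hi₁ hi₂
  obtain ⟨hAj, y, hyp, hyQ⟩ := hG.notMem_support_of_nonrooted (Q j) p hj₁ hj₂
  have heq : (∃ f, f ∈ (Q i).edges ∧ f ∈ (Q j).edges) → i = j := fun ⟨f, hf, hf'⟩ =>
    (hpartition f ((Q i).edges_subset_edgeSet hf)).unique hf hf'
  apply heq
  obtain ⟨R, hR⟩ := hT.connected.exists_isPath r (A i)
  obtain ⟨R', hR'⟩ := hT.connected.exists_isPath r (A j)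
  have hj : A j ∈ R.support ∨ A j ∈ (Q i).support := by
    obtain ⟨S, -, -, hS⟩ := (Q i).exists_path_within (Q i).start_mem_support hxQ
    have h := SimpleGraph.mem_support_of_separates p hAj hyp hxp (hrooted j y hyQ) (R.append S)
    rw [SimpleGraph.Walk.mem_support_append_iff] at h
    exact h.imp_right (fun h => hS h)
  have hi : A i ∈ R'.support ∨ A i ∈ (Q j).support := by
    obtain ⟨S, -, -, hS⟩ := (Q j).exists_path_within (Q j).start_mem_support hyQ
    have h := SimpleGraph.mem_support_of_separates p hAi hxp hyp (hrooted i x hxQ) (R'.append S)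
    rw [SimpleGraph.Walk.mem_support_append_iff] at h
    exact h.imp_right (fun h => hS h)
  have key : A j ∈ (Q i).support ∨ A i ∈ (Q j).support := by
    rcases hj with hj | hj
    · rcases hi with hi | hi
      · left
        rw [← hG.eq_of_mem_support R R' hR hR' hj hi]
        exact (Q i).start_mem_support
      · exact Or.inr hi
    · exact Or.inl hj
  rcases key with h | h
  · exact hG.exists_common_edge p (Q i) (Q j) hAj h (Q j).start_mem_support hxp hxQ hyp hyQ
  · exact hG.exists_common_edge p (Q i) (Q j) hAi (Q i).start_mem_support h hxp hxQ hyp hyQ
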